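/- A finite connected simple graph G is a convex geometry with respect to the l³-convexity if and only if the following three conditions hold: (1) G is chordal; (2) the diameter of G is at most 3; (3) every induced n-gem (n ≥ 4) contained in G is solved. -/

import Mathlib

open SimpleGraph

variable {V : Type*} {W : Type*}

/-- The convex hull of `S`: the smallest convex set containing `S`. -/
def chull (Cvx : Set V → Prop) (S : Set V) : Set V := ⋂₀ {T | S ⊆ T ∧ Cvx T}

/-- The set of extreme vertices of `S`. -/
def extremeSet (Cvx : Set V → Prop) (S : Set V) : Set V := {x | x ∈ S ∧ Cvx (S \ {x})}

/-- A convexity is a convex geometry if every convex set is the convex hull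
of its extreme vertices. -/
def IsConvexGeometry (Cvx : Set V → Prop) : Prop :=
  ∀ S : Set V, Cvx S → S = chull Cvx (extremeSet Cvx S)

/-- Convexity induced by a system of p-walks: `S` is convex iff every vertex
lying on a p-walk between two vertices of `S` belongs to `S`. -/
def PConvex (G : SimpleGraph V) (P : ∀ ⦃u v : V⦄, G.Walk u v → Prop) (S : Set V) : Prop :=
  ∀ ⦃u v : V⦄, u ∈ S → v ∈ S → ∀ w : G.Walk u v, P w → ∀ x ∈ w.support, x ∈ S

/-- `x` and `y` appear consecutively (in either order) in the list `l`. -/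
def consecIn (l : List V) (x y : V) : Prop := [x, y] <:+: l ∨ [y, x] <:+: l

/-- An induced path: a path such that the only edges of `G` between its vertices
are the consecutive ones. -/
def IsInducedPathW (G : SimpleGraph V) {u v : V} (w : G.Walk u v) : Prop :=
  w.IsPath ∧ ∀ x ∈ w.support, ∀ y ∈ w.support, G.Adj x y → consecIn w.support x y

/-- An induced cycle: a cycle such that the only edges of `G` between its vertices
are the consecutive (cyclically) ones. -/
def IsInducedCycleW (G : SimpleGraph V) {u : V} (w : G.Walk u u) : Prop :=
  w.IsCycle ∧ ∀ x ∈ w.support, ∀ y ∈ w.support, G.Adj x y → consecIn w.support x y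

/-- A graph is chordal if it has no induced cycle of length at least 4. -/
def Chordal (G : SimpleGraph V) : Prop :=
  ¬ ∃ (u : V) (w : G.Walk u u), IsInducedCycleW G w ∧ 4 ≤ w.length

/-- The cycle `w` has an odd chord: an edge of `G` joining two vertices of the cycle
whose distance along the cycle is odd and greater than 1. -/
def HasOddChord (G : SimpleGraph V) {u : V} (w : G.Walk u u) : Prop :=
  ∃ i j : ℕ, ∃ hi : i < w.support.length, ∃ hj : j < w.support.length, i < j ∧
    G.Adj (w.support.get ⟨i, hi⟩) (w.support.get ⟨j, hj⟩) ∧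
    Odd (min (j - i) (w.length - (j - i))) ∧ 1 < min (j - i) (w.length - (j - i))

/-- A graph is strongly chordal if it is chordal and every even cycle of length
at least 6 has an odd chord. -/
def StronglyChordal (G : SimpleGraph V) : Prop :=
  Chordal G ∧ ∀ (u : V) (w : G.Walk u u), w.IsCycle → Even w.length → 6 ≤ w.length →
    HasOddChord G w

/-- Closed neighborhood `N[v]`. -/
def closedNbhd (G : SimpleGraph V) (v : V) : Set V := insert v (G.neighborSet v)

/-- A vertex is simple if the closed neighborhoods of its closed neighbors form a
family totally ordered by inclusion. -/
def SimpleVtx (G : SimpleGraph V) (v : V) : Prop :=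
  ∀ u ∈ closedNbhd G v, ∀ w ∈ closedNbhd G v,
    closedNbhd G u ⊆ closedNbhd G w ∨ closedNbhd G w ⊆ closedNbhd G u

/-- A vertex is simplicial if its closed neighborhood is a clique. -/
def SimplicialVtx (G : SimpleGraph V) (v : V) : Prop :=
  G.IsClique (closedNbhd G v)

/-- An even-chorded path: a path with no odd chord and such that no endpoint
lies in a chord. -/
def IsEvenChorded (G : SimpleGraph V) {u v : V} (w : G.Walk u v) : Prop :=
  w.IsPath ∧ ∀ i j : ℕ, ∀ hi : i < w.support.length, ∀ hj : j < w.support.length,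
    i + 1 < j → G.Adj (w.support.get ⟨i, hi⟩) (w.support.get ⟨j, hj⟩) →
      Even (j - i) ∧ 0 < i ∧ j < w.support.length - 1

/-- A tolled walk `u₀u₁…u_k`: `u₀uᵢ ∈ E(G)` implies `i = 1` and `u_ju_k ∈ E(G)`
implies `j = k - 1`. -/
def IsTolledWalk (G : SimpleGraph V) {u v : V} (w : G.Walk u v) : Prop :=
  ∀ i : ℕ, ∀ hi : i < w.support.length,
    (G.Adj u (w.support.get ⟨i, hi⟩) → i = 1) ∧
    (G.Adj (w.support.get ⟨i, hi⟩) v → i = w.support.length - 2)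

/-- A weakly toll walk `u₀u₁…u_k`: `u₀uᵢ ∈ E(G)` implies `uᵢ = u₁` and
`u_ju_k ∈ E(G)` implies `u_j = u_{k-1}`. -/
def IsWeaklyTollWalk (G : SimpleGraph V) {u v : V} (w : G.Walk u v) : Prop :=
  ∀ i : ℕ, ∀ hi : i < w.support.length,
    (G.Adj u (w.support.get ⟨i, hi⟩) → w.support.get ⟨i, hi⟩ = w.support.getD 1 u) ∧
    (G.Adj (w.support.get ⟨i, hi⟩) v → w.support.get ⟨i, hi⟩ = w.support.getD (w.support.length - 2) v)

/-- An interval graph: vertices can be assigned nonempty closed real intervals so that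
distinct vertices are adjacent iff the intervals intersect. -/
def IsIntervalGraph (G : SimpleGraph V) : Prop :=
  ∃ a b : V → ℝ, (∀ v, a v ≤ b v) ∧
    ∀ u v : V, u ≠ v →
      (G.Adj u v ↔ (Set.Icc (a u) (b u) ∩ Set.Icc (a v) (b v)).Nonempty)

/-- A proper interval graph: an interval model in which no interval properly
contains another. -/
def IsProperIntervalGraph (G : SimpleGraph V) : Prop :=
  ∃ a b : V → ℝ, (∀ v, a v ≤ b v) ∧
    (∀ u v : V, u ≠ v →
      (G.Adj u v ↔ (Set.Icc (a u) (b u) ∩ Set.Icc (a v) (b v)).Nonempty)) ∧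
    ∀ u v : V, ¬ (Set.Icc (a u) (b u) ⊂ Set.Icc (a v) (b v))

/-- An end vertex: some interval model in which its interval is an end interval. -/
def IsEndVertex (G : SimpleGraph V) (x : V) : Prop :=
  ∃ a b : V → ℝ, (∀ v, a v ≤ b v) ∧
    (∀ u v : V, u ≠ v →
      (G.Adj u v ↔ (Set.Icc (a u) (b u) ∩ Set.Icc (a v) (b v)).Nonempty)) ∧
    ((∀ v, a x ≤ a v) ∨ (∀ v, b v ≤ b x))

/-- `G` contains an induced subgraph isomorphic to `H`. -/
def HasInducedSubgraphIso (G : SimpleGraph V) (H : SimpleGraph W) : Prop :=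
  ∃ f : W ↪ V, ∀ a b : W, G.Adj (f a) (f b) ↔ H.Adj a b

def gemGraph : SimpleGraph (Fin 5) :=
  SimpleGraph.fromRel fun a b =>
    ((a : ℕ), (b : ℕ)) ∈ [(0,1),(1,2),(2,3),(4,0),(4,1),(4,2),(4,3)]

def houseGraph : SimpleGraph (Fin 5) :=
  SimpleGraph.fromRel fun a b =>
    ((a : ℕ), (b : ℕ)) ∈ [(0,1),(1,2),(2,3),(0,3),(0,4),(1,4)]

def dominoGraph : SimpleGraph (Fin 6) :=
  SimpleGraph.fromRel fun a b =>
    ((a : ℕ), (b : ℕ)) ∈ [(0,1),(1,2),(2,3),(0,3),(2,4),(4,5),(3,5)]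

def aGraph : SimpleGraph (Fin 6) :=
  SimpleGraph.fromRel fun a b =>
    ((a : ℕ), (b : ℕ)) ∈ [(0,1),(1,2),(2,3),(0,3),(2,4),(3,5)]

/-- A triangle path: a path such that any two of its vertices at distance
greater than 2 along the path are non-adjacent in `G`. -/
def IsTrianglePath (G : SimpleGraph V) {u v : V} (w : G.Walk u v) : Prop :=
  w.IsPath ∧ ∀ i j : ℕ, ∀ hi : i < w.support.length, ∀ hj : j < w.support.length,
    i + 2 < j → ¬ G.Adj (w.support.get ⟨i, hi⟩) (w.support.get ⟨j, hj⟩)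

/-- `S` is `H`-free convex. -/
def HFreeConvex [Fintype W] (G : SimpleGraph V) (H : SimpleGraph W) (S : Set V) : Prop :=
  ∀ (S' : Finset V), ↑S' ⊆ S → S'.card = Fintype.card W - 1 →
    ∀ x : V, Nonempty ((G.induce (↑S' ∪ {x} : Set V)) ≃g H) → x ∈ S

/-- `a b c d` is an induced path on four vertices of `G`. -/
def InducedP4 (G : SimpleGraph V) (a b c d : V) : Prop :=
  G.Adj a b ∧ G.Adj b c ∧ G.Adj c d ∧ ¬ G.Adj a c ∧ ¬ G.Adj a d ∧ ¬ G.Adj b d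

/-- Every connected component of `G` is a star. -/
def StarForest (G : SimpleGraph V) : Prop :=
  ∀ v : V, ∃ c : V, G.Reachable v c ∧ (∀ x, G.Reachable c x → x ≠ c → G.Adj c x) ∧
    ∀ x y, G.Adj c x → G.Adj c y → ¬ G.Adj x y

/-- An induced `n`-gem in `G`: `x 0, …, x n` is an induced path and `u` is adjacent
to all of them, the whole forming an induced subgraph of `G`. -/
def IsInducedNGem (G : SimpleGraph V) (n : ℕ) (x : Fin (n + 1) → V) (u : V) : Prop :=
  Function.Injective x ∧ (∀ i, x i ≠ u) ∧
  (∀ i j, G.Adj (x i) (x j) ↔ ((i : ℕ) + 1 = (j : ℕ) ∨ (j : ℕ) + 1 = (i : ℕ))) ∧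
  (∀ i, G.Adj u (x i))

/-- The induced `n`-gem is solved: there is an induced path of length 3 in `G`
connecting `x 0` and `x n` that avoids `u`. -/
def GemSolved (G : SimpleGraph V) (n : ℕ) (x : Fin (n + 1) → V) (u : V) : Prop :=
  ∃ w : G.Walk (x 0) (x (Fin.last n)), IsInducedPathW G w ∧ w.length = 3 ∧ u ∉ w.support

/-!
A convexity defined by a family of induced paths that includes all those of length at most `2` is a
convex geometry iff `G` is chordal and every convex set is monophonically convex. In a convex
geometry, let `C` be convex and `D` a set each of whose vertices outside `C` is adjacent to two
distinct nonadjacent vertices of `D`: then all extreme vertices of the hull of `D` lie in `C`, so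
`D ⊆ C`. Taking for `D` an induced path with ends in `C` shows that `C` is monophonically convex,
and taking for `D` an induced cycle with `C = ∅` shows that `G` is chordal. The converse rests on a
relative form of Dirac's lemma: in a chordal graph, a set `A` not contained in a monophonically
convex set `T` has a vertex outside `T` whose neighbours in `A` form a clique. For convex `A` such a
vertex is extreme, which is absurd if `T` is the hull of the extreme vertices of `A`.

For the `l³`-convexity of a chordal graph, the sets that are convex but not monophonically convex
come from pairs `u, v` at distance at least `4`, and from pairs `u, v` that are joined by an
induced path of length at least `4` but by none of length `3`, in which case `u`, `v` and their
common neighbours form a convex set. If `z` is a common neighbour of nonadjacent `u` and `v`, its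
closed neighbourhood contains every induced path from `u` to `v`, and an induced path of length at
least `4` avoiding `z` spans a gem with apex `z`.
-/

section InducedPaths

variable {G : SimpleGraph V} {a b u v : V}

theorem isInducedPathW_iff {w : G.Walk u v} : IsInducedPathW G w ↔ w.IsPath ∧ w.IsChordless := by
  simp only [IsInducedPathW, consecIn, Walk.infix_support_iff_mem_edges,
    Walk.isChordless_iff_forall_mem_edges]
  grind

theorem isInducedCycleW_iff {w : G.Walk u u} :
    IsInducedCycleW G w ↔ w.IsCycle ∧ w.IsChordless := by
  simp only [IsInducedCycleW, consecIn, Walk.infix_support_iff_mem_edges,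
    Walk.isChordless_iff_forall_mem_edges]
  grind

theorem isInducedPathW_nil : IsInducedPathW G (.nil : G.Walk u u) := by
  simp [IsInducedPathW]

theorem isInducedPathW_cons_iff {h : G.Adj u b} {w : G.Walk b v} :
    IsInducedPathW G (.cons h w) ↔
      IsInducedPathW G w ∧ u ∉ w.support ∧ ∀ x ∈ w.support, G.Adj u x → x = b := by
  simp only [isInducedPathW_iff, Walk.cons_isPath_iff, Walk.isChordless_iff_forall_mem_edges,
    Walk.support_cons, Walk.edges_cons, List.mem_cons]
  constructor
  · rintro ⟨⟨hw, hu⟩, hc⟩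
    refine ⟨⟨hw, fun x y hx hy hxy ↦ ?_⟩, hu, fun x hx hux ↦ ?_⟩
    · refine (hc (.inr hx) (.inr hy) hxy).resolve_left fun he ↦ ?_
      grind [Sym2.eq_iff]
    · exact (hc (.inl rfl) (.inr hx) hux).elim Sym2.congr_right.mp
        fun he ↦ absurd (w.fst_mem_support_of_mem_edges he) hu
  · rintro ⟨⟨hw, hc⟩, hu, hb⟩
    refine ⟨⟨hw, hu⟩, ?_⟩
    rintro x y (rfl | hx) (rfl | hy) hxy
    · exact absurd hxy G.irrefl
    · exact .inl (by rw [hb y hy hxy])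
    · exact .inl (by rw [hb x hx hxy.symm, Sym2.eq_swap])
    · exact .inr (hc hx hy hxy)

theorem isInducedPathW_cons_cons_nil_iff {x y z : V} {hxy : G.Adj x y} {hyz : G.Adj y z} :
    IsInducedPathW G (.cons hxy (.cons hyz .nil)) ↔ x ≠ z ∧ ¬G.Adj x z := by
  simp only [isInducedPathW_cons_iff, isInducedPathW_nil, Walk.support_cons, Walk.support_nil,
    List.mem_cons, List.not_mem_nil, or_false, forall_eq_or_imp, forall_eq]
  grind [hxy.ne, hyz.ne]

theorem isInducedPathW_cons_cons_cons_nil_iff {x y z t : V} {hxy : G.Adj x y} {hyz : G.Adj y z}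
    {hzt : G.Adj z t} :
    IsInducedPathW G (.cons hxy (.cons hyz (.cons hzt .nil))) ↔ InducedP4 G x y z t := by
  rw [isInducedPathW_cons_iff, isInducedPathW_cons_cons_nil_iff]
  simp only [InducedP4, Walk.support_cons, Walk.support_nil, List.mem_cons, List.not_mem_nil,
    or_false, forall_eq_or_imp, forall_eq]
  grind [hxy.ne, hyz.ne, hzt.ne, G.adj_comm]

theorem eq_or_eq_of_mem_support_of_length_le_one {w : G.Walk u v} (hw : w.length ≤ 1) {x : V}
    (hx : x ∈ w.support) : x = u ∨ x = v := by
  cases w with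
  | nil => simp_all
  | cons h w => cases w <;> simp_all

theorem two_le_length_of_ne_of_not_adj (w : G.Walk u v) (hne : u ≠ v) (hnadj : ¬G.Adj u v) :
    2 ≤ w.length := by
  by_contra! hlt
  interval_cases hl : w.length
  · exact hne (Walk.eq_of_length_eq_zero hl)
  · exact hnadj (Walk.adj_of_length_eq_one hl)

namespace IsInducedPathW

theorem of_append_left {p : G.Walk u a} {q : G.Walk a v} (h : IsInducedPathW G (p.append q)) :
    IsInducedPathW G p := by
  induction p with
  | nil => exact isInducedPathW_nil
  | cons _ p ih =>
    rw [Walk.cons_append, isInducedPathW_cons_iff] at h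
    have hp := Walk.support_subset_support_append_left p q
    exact isInducedPathW_cons_iff.mpr ⟨ih h.1, fun hu ↦ h.2.1 (hp hu), fun x hx ↦ h.2.2 x (hp hx)⟩

theorem of_append_right {p : G.Walk u a} {q : G.Walk a v} (h : IsInducedPathW G (p.append q)) :
    IsInducedPathW G q := by
  induction p with
  | nil => exact h
  | cons _ p ih => exact ih (isInducedPathW_cons_iff.mp h).1

theorem takeUntil [DecidableEq V] {w : G.Walk u v} (hw : IsInducedPathW G w)
    (ha : a ∈ w.support) : IsInducedPathW G (w.takeUntil a ha) :=
  of_append_left (q := w.dropUntil a ha) (by rwa [Walk.take_spec])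

theorem dropUntil [DecidableEq V] {w : G.Walk u v} (hw : IsInducedPathW G w)
    (ha : a ∈ w.support) : IsInducedPathW G (w.dropUntil a ha) :=
  of_append_right (p := w.takeUntil a ha) (by rwa [Walk.take_spec])

theorem exists_append_cons {w : G.Walk b v} (hw : IsInducedPathW G w) (ha : a ∉ w.support)
    (hadj : ∃ x ∈ w.support, G.Adj a x) :
    ∃ (k : V) (h : G.Adj a k) (r : G.Walk b k) (q : G.Walk k v),
      w = r.append q ∧ IsInducedPathW G (.cons h q) := by
  induction w with
  | nil =>
    simp only [Walk.support_nil, List.mem_singleton, exists_eq_left] at hadj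
    exact ⟨_, hadj, .nil, .nil, rfl,
      isInducedPathW_cons_iff.mpr ⟨isInducedPathW_nil, ha, by simp⟩⟩
  | @cons b _ _ h w ih =>
    by_cases hw' : ∃ x ∈ w.support, G.Adj a x
    · obtain ⟨k, hk, r, q, rfl, hq⟩ :=
        ih (isInducedPathW_cons_iff.mp hw).1 (fun h ↦ ha (List.mem_cons_of_mem _ h)) hw'
      exact ⟨k, hk, .cons h r, q, rfl, hq⟩
    · push Not at hw'
      simp only [Walk.support_cons, List.mem_cons] at hadj
      obtain ⟨x, rfl | hx, hax⟩ := hadj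
      · refine ⟨_, hax, .nil, _, rfl, isInducedPathW_cons_iff.mpr ⟨hw, ha, ?_⟩⟩
        simp only [Walk.support_cons, List.mem_cons]
        rintro y (rfl | hy) hay
        · rfl
        · exact absurd hay (hw' y hy)
      · exact absurd hax (hw' x hx)

theorem length_le_one {w : G.Walk u v} (hw : IsInducedPathW G w) (huv : u ≠ v → G.Adj u v) :
    w.length ≤ 1 := by
  cases w with
  | nil => simp
  | cons h w =>
    obtain ⟨hw, hu, hadj⟩ := isInducedPathW_cons_iff.mp hw
    obtain rfl := hadj _ w.end_mem_support (huv (ne_of_mem_of_not_mem w.end_mem_support hu).symm)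
    rw [Walk.length_cons, Walk.length_eq_zero_iff.mpr (Walk.isPath_iff_nil.mp hw.1)]

theorem exists_not_adj_neighbors {w : G.Walk u v} (hw : IsInducedPathW G w) {x : V}
    (hx : x ∈ w.support) (hxu : x ≠ u) (hxv : x ≠ v) :
    ∃ y ∈ w.support, ∃ z ∈ w.support, G.Adj y x ∧ G.Adj x z ∧ y ≠ z ∧ ¬G.Adj y z := by
  induction w with
  | nil => simp_all
  | @cons u b _ h w ih =>
    obtain ⟨hw, hu, hadj⟩ := isInducedPathW_cons_iff.mp hw
    obtain rfl | hx := List.mem_cons.mp hx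
    · contradiction
    by_cases hxb : x = b
    · subst hxb
      cases w with
      | nil => contradiction
      | @cons _ c _ h' w' =>
        have hc : c ∈ (Walk.cons h' w').support := by simp
        exact ⟨u, by simp, c, by simp, h, h', (ne_of_mem_of_not_mem hc hu).symm,
          fun huc ↦ h'.ne' (hadj c hc huc)⟩
    · obtain ⟨y, hy, z, hz, h⟩ := ih hw hx hxb hxv
      exact ⟨y, List.mem_cons_of_mem _ hy, z, List.mem_cons_of_mem _ hz, h⟩

end IsInducedPathW

theorem exists_isInducedPathW (w : G.Walk u v) :
    ∃ w' : G.Walk u v, IsInducedPathW G w' ∧ w'.support ⊆ w.support ∧ w'.length ≤ w.length := by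
  classical
  induction w with
  | nil => exact ⟨.nil, isInducedPathW_nil, by simp, by simp⟩
  | @cons u _ _ h w ih =>
    obtain ⟨p, hp, hsupp, hlen⟩ := ih
    by_cases hu : u ∈ p.support
    · refine ⟨p.dropUntil u hu, hp.dropUntil hu, fun x hx ↦ ?_, ?_⟩
      · exact List.mem_cons_of_mem _ (hsupp (p.support_dropUntil_subset_support hu hx))
      · exact ((p.length_dropUntil_le_length hu).trans hlen).trans (by simp)
    · obtain ⟨k, hk, r, q, rfl, hq⟩ := hp.exists_append_cons hu ⟨_, p.start_mem_support, h⟩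
      refine ⟨.cons hk q, hq, ?_, ?_⟩
      · simp only [Walk.support_cons]
        exact List.cons_subset_cons _
          (List.Subset.trans (r.support_subset_support_append_right q) hsupp)
      · simp only [Walk.length_append, Walk.length_cons] at hlen ⊢
        lia

end InducedPaths

/-- Monophonic convexity: `S` contains every induced path between two of its vertices. -/
def MConvex (G : SimpleGraph V) (S : Set V) : Prop :=
  PConvex G (fun _ _ w => IsInducedPathW G w) S

/-- The `l^k`-convexity: `S` contains every induced path with at most `k` edges between two of its
vertices. -/
def LkConvex (G : SimpleGraph V) (k : ℕ) (S : Set V) : Prop :=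
  PConvex G (fun _ _ w => IsInducedPathW G w ∧ w.length ≤ k) S

section Chordal

variable {G : SimpleGraph V} {a b u : V}

theorem mConvex_of_forall_exists_interior {S : Set V}
    (h : ∀ ⦃u v : V⦄ (w : G.Walk u v), IsInducedPathW G w → u ∈ S → v ∈ S → u ≠ v → ¬G.Adj u v →
      (∀ ⦃a b : V⦄ (p : G.Walk a b), IsInducedPathW G p → p.length < w.length → a ∈ S → b ∈ S →
        ∀ x ∈ p.support, x ∈ S) →
      ∃ c ∈ w.support, c ≠ u ∧ c ≠ v ∧ c ∈ S) :
    MConvex G S := by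
  classical
  suffices key : ∀ n, ∀ ⦃u v : V⦄ (w : G.Walk u v), w.length = n → IsInducedPathW G w →
      u ∈ S → v ∈ S → ∀ x ∈ w.support, x ∈ S from fun u v hu hv w hw ↦ key _ w rfl hw hu hv
  intro n
  induction n using Nat.strong_induction_on with
  | _ n ih =>
    rintro u v w rfl hw hu hv x hx
    by_cases huv : u ≠ v → G.Adj u v
    · obtain rfl | rfl := eq_or_eq_of_mem_support_of_length_le_one (hw.length_le_one huv) hx <;>
        assumption
    obtain ⟨hne, hnadj⟩ := Classical.not_imp.mp huv
    obtain ⟨c, hc, hcu, hcv, hcS⟩ := h w hw hu hv hne hnadj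
      fun a b p hp hlt ↦ ih _ hlt p rfl hp
    rw [← w.take_spec hc, Walk.mem_support_append_iff] at hx
    obtain hx | hx := hx
    · exact ih _ (Walk.length_takeUntil_lt_length hc hcv) _ rfl (hw.takeUntil hc) hu hcS x hx
    · exact ih _ (Walk.length_dropUntil_lt_length hc hcu) _ rfl (hw.dropUntil hc) hcS hv x hx

theorem isInducedCycleW_cons_concat {w : G.Walk a b} (hw : IsInducedPathW G w) (hab : a ≠ b)
    (hua : G.Adj u a) (hbu : G.Adj b u) (hu : u ∉ w.support)
    (hadj : ∀ x ∈ w.support, G.Adj u x → x = a ∨ x = b) :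
    IsInducedCycleW G (.cons hua (w.concat hbu)) := by
  obtain ⟨hpath, hchord⟩ := isInducedPathW_iff.mp hw
  rw [isInducedCycleW_iff, Walk.cons_isCycle_iff, Walk.concat_isPath_iff,
    Walk.isChordless_iff_forall_mem_edges]
  simp only [Walk.edges_cons, Walk.edges_concat, Walk.support_cons, Walk.support_concat,
    List.concat_eq_append, List.mem_cons, List.mem_append, List.not_mem_nil, or_false]
  refine ⟨⟨⟨hpath, hu⟩, ?_⟩, ?_⟩
  · rintro (he | he)
    · exact hu (w.fst_mem_support_of_mem_edges he)
    · grind [Sym2.eq_iff, hbu.ne]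
  · have from_apex : ∀ y ∈ w.support, G.Adj u y →
        s(u, y) = s(u, a) ∨ s(u, y) ∈ w.edges ∨ s(u, y) = s(b, u) := by
      intro y hy huy
      obtain rfl | rfl := hadj y hy huy
      · exact .inl rfl
      · exact .inr (.inr Sym2.eq_swap)
    intro x y hx hy hxy
    by_cases hxu : x = u <;> by_cases hyu : y = u
    · exact absurd (hxu.trans hyu.symm) hxy.ne
    · subst hxu
      exact from_apex y (by tauto) hxy
    · subst hyu
      rw [Sym2.eq_swap]
      exact from_apex x (by tauto) hxy.symm
    · exact .inr (.inl (hchord.mem_edges (by tauto) (by tauto) hxy))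

theorem Chordal.exists_interior_mem_closedNbhd (hG : Chordal G) {w : G.Walk a b}
    (hw : IsInducedPathW G w) (hab : a ≠ b) (hnadj : ¬G.Adj a b) (hua : G.Adj u a)
    (hub : G.Adj u b) : ∃ c ∈ w.support, c ≠ a ∧ c ≠ b ∧ c ∈ closedNbhd G u := by
  by_contra! h
  have hu : u ∉ w.support := fun hu ↦ h u hu hua.ne hub.ne (Set.mem_insert _ _)
  refine hG ⟨u, _, isInducedCycleW_cons_concat hw hab hua hub.symm hu fun x hx hux ↦ ?_, ?_⟩
  · by_contra! hx'
    exact h x hx hx'.1 hx'.2 (Set.mem_insert_of_mem _ hux)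
  · simpa using two_le_length_of_ne_of_not_adj w hab hnadj

theorem Chordal.mConvex_closedNbhd (hG : Chordal G) (u : V) : MConvex G (closedNbhd G u) := by
  refine mConvex_of_forall_exists_interior fun a b w hw ha hb hab hnadj _ ↦ ?_
  obtain rfl | hua := Set.mem_insert_iff.mp ha
  · exact absurd ((Set.mem_insert_iff.mp hb).resolve_left hab.symm) hnadj
  obtain rfl | hub := Set.mem_insert_iff.mp hb
  · exact absurd (G.adj_symm hua) hnadj
  exact hG.exists_interior_mem_closedNbhd hw hab hnadj hua hub

theorem IsInducedCycleW.rotate [DecidableEq V] {c : G.Walk u u} (hc : IsInducedCycleW G c)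
    (ha : a ∈ c.support) : IsInducedCycleW G (c.rotate a ha) := by
  rw [isInducedCycleW_iff, Walk.isChordless_iff_forall_mem_edges] at hc ⊢
  simpa only [Walk.isCycle_rotate, Walk.mem_support_rotate_iff, (c.rotate_edges a ha).mem_iff]
    using hc

theorem IsInducedCycleW.exists_not_adj_neighbors {c : G.Walk u u} (hc : IsInducedCycleW G c)
    (hlen : 4 ≤ c.length) {x : V} (hx : x ∈ c.support) :
    ∃ y ∈ c.support, ∃ z ∈ c.support, G.Adj y x ∧ G.Adj x z ∧ y ≠ z ∧ ¬G.Adj y z := by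
  classical
  have key := hc.rotate hx
  rw [← c.length_rotate x hx] at hlen
  simp only [← c.mem_support_rotate_iff x hx]
  generalize c.rotate x hx = c' at key hlen
  obtain ⟨hcycle, hchord⟩ := isInducedCycleW_iff.mp key
  cases c' with
  | nil => simp at hlen
  | @cons _ b _ h p =>
    obtain ⟨hp, hxb⟩ := (Walk.cons_isCycle_iff p h).mp hcycle
    have hnil : ¬p.Nil := fun hp ↦ h.ne' hp.eq
    have hadj := p.adj_penultimate hnil
    rw [Walk.length_cons] at hlen
    have hne : b ≠ p.penultimate := fun hb ↦ by
      have := (hp.getVert_eq_start_iff (Nat.sub_le _ 1)).mp hb.symm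
      lia
    refine ⟨p.penultimate, by simp, b, by simp, hadj, h, hne.symm, fun hbp ↦ ?_⟩
    have he := hchord.mem_edges (by simp) (by simp) hbp.symm
    rw [Walk.edges_cons, List.mem_cons] at he
    obtain he | he := he
    · grind [Sym2.eq_iff, hadj.ne]
    · have := hp.getVert_injOn (x₁ := p.length - 1) (Nat.sub_le _ 1)
        (x₂ := 1) (by simp only [Set.mem_ofPred_eq]; lia)
        (hp.eq_snd_of_mem_edges he)
      lia

end Chordal

section Geometry

variable {Cvx : Set V → Prop} {C D S : Set V}

theorem subset_chull : S ⊆ chull Cvx S :=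
  Set.subset_sInter fun _ hT ↦ hT.1

theorem chull_subset (hDC : D ⊆ C) (hC : Cvx C) : chull Cvx D ⊆ C :=
  Set.sInter_subset_of_mem ⟨hDC, hC⟩

theorem extremeSet_chull_subset : extremeSet Cvx (chull Cvx D) ⊆ D := by
  rintro x ⟨hx, hconv⟩
  by_contra hxD
  have hsub : chull Cvx D ⊆ chull Cvx D \ {x} :=
    chull_subset (Set.subset_sdiff_singleton subset_chull hxD) hconv
  exact (hsub hx).2 rfl

theorem IsConvexGeometry.subset_of_forall_extreme (hgeo : IsConvexGeometry Cvx)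
    (hD : Cvx (chull Cvx D)) (hC : Cvx C)
    (h : ∀ d ∈ D, d ∈ extremeSet Cvx (chull Cvx D) → d ∈ C) : D ⊆ C := by
  calc
    D ⊆ chull Cvx D := subset_chull
    _ = chull Cvx (extremeSet Cvx (chull Cvx D)) := hgeo _ hD
    _ ⊆ C := chull_subset (fun d hd ↦ h d (extremeSet_chull_subset hd) hd) hC

variable {G : SimpleGraph V} {P : ∀ ⦃u v : V⦄, G.Walk u v → Prop}

theorem pConvex_chull : PConvex G P (chull (PConvex G P) S) :=
  fun _ _ hu hv w hw x hx _ hT ↦ hT.2 (hu _ hT) (hv _ hT) w hw x hx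

theorem PConvex.mem_of_adj_adj
    (hP : ∀ ⦃u v⦄ (w : G.Walk u v), IsInducedPathW G w → w.length ≤ 2 → P w)
    (hS : PConvex G P S) {a b c : V} (ha : a ∈ S) (hc : c ∈ S) (hab : G.Adj a b) (hbc : G.Adj b c)
    (hac : a ≠ c) (hnadj : ¬G.Adj a c) : b ∈ S :=
  hS ha hc (.cons hab (.cons hbc .nil))
    (hP _ (isInducedPathW_cons_cons_nil_iff.mpr ⟨hac, hnadj⟩) le_rfl) b (by simp)

theorem IsConvexGeometry.subset_of_forall_exists_adj_adj
    (hP : ∀ ⦃u v⦄ (w : G.Walk u v), IsInducedPathW G w → w.length ≤ 2 → P w)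
    (hgeo : IsConvexGeometry (PConvex G P)) (hC : PConvex G P C)
    (h : ∀ d ∈ D, d ∉ C → ∃ a ∈ D, ∃ b ∈ D, G.Adj a d ∧ G.Adj d b ∧ a ≠ b ∧ ¬G.Adj a b) :
    D ⊆ C := by
  refine hgeo.subset_of_forall_extreme pConvex_chull hC fun d hd hext ↦ ?_
  by_contra hdC
  obtain ⟨a, ha, b, hb, had, hdb, hab, hnadj⟩ := h d hd hdC
  have hmem : d ∈ chull (PConvex G P) D \ {d} :=
    hext.2.mem_of_adj_adj hP ⟨subset_chull ha, had.ne⟩ ⟨subset_chull hb, hdb.ne'⟩ had hdb hab hnadj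
  exact hmem.2 rfl

theorem IsConvexGeometry.mConvex
    (hP : ∀ ⦃u v⦄ (w : G.Walk u v), IsInducedPathW G w → w.length ≤ 2 → P w)
    (hgeo : IsConvexGeometry (PConvex G P)) (hS : PConvex G P S) : MConvex G S := by
  intro u v hu hv w hw
  refine hgeo.subset_of_forall_exists_adj_adj hP hS fun x hx hxS ↦ ?_
  exact hw.exists_not_adj_neighbors hx (ne_of_mem_of_not_mem hu hxS).symm
    (ne_of_mem_of_not_mem hv hxS).symm

theorem IsConvexGeometry.chordal
    (hP : ∀ ⦃u v⦄ (w : G.Walk u v), IsInducedPathW G w → w.length ≤ 2 → P w)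
    (hgeo : IsConvexGeometry (PConvex G P)) : Chordal G := by
  rintro ⟨u, c, hc, hlen⟩
  have hempty : {x | x ∈ c.support} ⊆ (∅ : Set V) :=
    hgeo.subset_of_forall_exists_adj_adj hP (fun _ _ h ↦ h.elim) fun x hx _ ↦
      hc.exists_not_adj_neighbors hlen hx
  exact hempty c.start_mem_support

end Geometry

/-- The open neighbourhood of `K` inside `A`: the vertices of `A` outside `K` with a neighbour
in `K`. -/
def nbhdIn (G : SimpleGraph V) (A K : Set V) : Set V := {a | a ∈ A \ K ∧ ∃ k ∈ K, G.Adj a k}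

section Simplicial

variable {G : SimpleGraph V} {A B K S T : Set V}

theorem mem_closedNbhd_comm {u v : V} : u ∈ closedNbhd G v ↔ v ∈ closedNbhd G u := by
  simp only [closedNbhd, Set.mem_insert_iff, mem_neighborSet, eq_comm, G.adj_comm]

theorem exists_connected_nbhdIn_eq_empty {k : V} (hk : k ∈ B) :
    ∃ K ⊆ B, k ∈ K ∧ (G.induce K).Connected ∧ nbhdIn G B K = ∅ := by
  classical
  let K : Set V := {z | ∃ p : G.Walk k z, ∀ x ∈ p.support, x ∈ B}
  have hkK : k ∈ K := ⟨.nil, by simpa using hk⟩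
  refine ⟨K, fun z ⟨p, hp⟩ ↦ hp z p.end_mem_support, hkK, ?_, Set.eq_empty_of_forall_notMem ?_⟩
  · refine G.induce_connected_of_patches k hkK fun {z} hz ↦ ?_
    obtain ⟨p, hp⟩ := hz
    refine ⟨{x | x ∈ p.support}, fun x hx ↦ ⟨p.takeUntil x hx, fun y hy ↦ ?_⟩, p.start_mem_support,
      p.end_mem_support, p.connected_induce_support.preconnected _ _⟩
    exact hp y (p.support_takeUntil_subset_support hx hy)
  · rintro a ⟨⟨haB, haK⟩, z, ⟨p, hp⟩, haz⟩
    refine haK ⟨p.concat haz.symm, fun x hx ↦ ?_⟩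
    rw [Walk.support_concat, List.mem_append, List.mem_singleton] at hx
    obtain hx | rfl := hx
    exacts [hp x hx, haB]

theorem MConvex.isClique_nbhdIn (hS : MConvex G S) (hK : (G.induce K).Preconnected)
    (hSK : Disjoint S K) : G.IsClique (nbhdIn G S K) := by
  rintro a ⟨⟨ha, -⟩, k, hk, hak⟩ b ⟨⟨hb, -⟩, l, hl, hbl⟩ hab
  obtain ⟨p, hp⟩ : ∃ p : G.Walk k l, ∀ x ∈ p.support, x ∈ K := by
    obtain ⟨p⟩ := hK ⟨k, hk⟩ ⟨l, hl⟩
    refine ⟨p.map (Embedding.induce K).toHom, fun x hx ↦ ?_⟩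
    obtain ⟨y, -, rfl⟩ := List.mem_map.mp (p.support_map _ ▸ hx)
    exact y.2
  obtain ⟨w, hw, hsupp, -⟩ := exists_isInducedPathW (.cons hak (p.concat hbl.symm))
  cases w with
  | nil => contradiction
  | @cons _ c _ hac q =>
    have hc : c ∈ (Walk.cons hac q).support := by simp
    have hcK : c ∉ K := Set.disjoint_left.mp hSK (hS ha hb _ hw c hc)
    have hcb : c = b := by
      have := hsupp hc
      simp only [Walk.support_cons, Walk.support_concat, List.mem_cons, List.mem_append,
        List.not_mem_nil, or_false] at this
      exact (this.resolve_left hac.ne').resolve_left fun hcp ↦ hcK (hp c hcp)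
    exact hcb ▸ hac

theorem Chordal.exists_isClique_nbhdIn_sdiff_closedNbhd (hG : Chordal G) {w k : V}
    (hw : nbhdIn G A K ⊆ closedNbhd G w) (hk : k ∈ K \ closedNbhd G w) :
    ∃ L ⊆ K \ closedNbhd G w, L.Nonempty ∧ G.IsClique (nbhdIn G A L) := by
  obtain ⟨L, hLK, hkL, hL, hclosed⟩ := exists_connected_nbhdIn_eq_empty (G := G) hk
  refine ⟨L, hLK, ⟨k, hkL⟩, ((hG.mConvex_closedNbhd w).isClique_nbhdIn hL.preconnected
    (Set.disjoint_left.mpr fun x hx hxL ↦ (hLK hxL).2 hx)).subset ?_⟩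
  rintro a ⟨⟨haA, haL⟩, l, hl, hal⟩
  refine ⟨⟨?_, haL⟩, l, hl, hal⟩
  by_contra haw
  by_cases haK : a ∈ K
  · exact hclosed.subset ⟨⟨⟨haK, haw⟩, haL⟩, l, hl, hal⟩
  · exact haw (hw ⟨⟨haA, haK⟩, l, (hLK hl).1, hal⟩)

theorem isClique_inter_neighborSet_of_subset_closedNbhd
    (hK : ∀ w ∈ K, K ∪ nbhdIn G A K ⊆ closedNbhd G w) (hclique : G.IsClique (nbhdIn G A K)) {s : V}
    (hs : s ∈ K) : G.IsClique (A ∩ G.neighborSet s) := by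
  have hcover : ∀ x ∈ A ∩ G.neighborSet s, x ∈ K ∨ x ∈ nbhdIn G A K := fun x ⟨hxA, hsx⟩ ↦
    or_iff_not_imp_left.mpr fun hxK ↦ ⟨⟨hxA, hxK⟩, s, hs, hsx.symm⟩
  intro x hx y hy hxy
  obtain hxK | hxN := hcover x hx
  · exact (hK x hxK (hcover y hy)).resolve_left hxy.symm
  obtain hyK | hyN := hcover y hy
  · exact ((hK y hyK (.inr hxN)).resolve_left hxy).symm
  · exact hclique hxN hyN hxy

theorem Chordal.exists_isClique_inter_neighborSet_of_nbhdIn (hG : Chordal G) (hfin : K.Finite)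
    (hne : K.Nonempty) (hclique : G.IsClique (nbhdIn G A K)) :
    ∃ s ∈ K, G.IsClique (A ∩ G.neighborSet s) := by
  induction hn : K.ncard using Nat.strong_induction_on generalizing K with
  | _ n ih =>
    subst hn
    by_contra! hno
    -- A vertex of `K` outside `N[w]` would yield a smaller nonempty set with a clique boundary.
    have absorb : ∀ w, (K ∩ closedNbhd G w).Nonempty → nbhdIn G A K ⊆ closedNbhd G w →
        K ⊆ closedNbhd G w := by
      rintro w ⟨x, hxK, hxw⟩ hw
      by_contra hK
      obtain ⟨k, hk⟩ := Set.not_subset.mp hK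
      obtain ⟨L, hLK, hL, hLclique⟩ := hG.exists_isClique_nbhdIn_sdiff_closedNbhd hw hk
      have hLss : L ⊂ K := ⟨hLK.trans Set.sdiff_subset, fun h ↦ (hLK (h hxK)).2 hxw⟩
      obtain ⟨s, hs, hs'⟩ :=
        ih _ (Set.ncard_lt_ncard hLss hfin) (hfin.subset hLss.subset) hL hLclique rfl
      exact hno s (hLss.subset hs) hs'
    have boundary : ∀ a ∈ nbhdIn G A K, K ⊆ closedNbhd G a := fun a ha ↦ by
      obtain ⟨-, k, hk, hak⟩ := id ha
      exact absorb a ⟨k, hk, .inr hak⟩ fun b hb ↦ or_iff_not_imp_left.mpr fun hba ↦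
        hclique ha hb (Ne.symm hba)
    obtain ⟨s, hs⟩ := hne
    refine hno s hs (isClique_inter_neighborSet_of_subset_closedNbhd (fun w hw ↦ ?_) hclique hs)
    have hNw : nbhdIn G A K ⊆ closedNbhd G w := fun a ha ↦ mem_closedNbhd_comm.mp (boundary a ha hw)
    exact Set.union_subset (absorb w ⟨w, hw, .inl rfl⟩ hNw) hNw

theorem Chordal.exists_isClique_inter_neighborSet (hG : Chordal G) (hT : MConvex G T)
    (hfin : (A \ T).Finite) (hne : (A \ T).Nonempty) :
    ∃ s ∈ A \ T, G.IsClique (A ∩ G.neighborSet s) := by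
  obtain ⟨v, hv⟩ := hne
  obtain ⟨K, hK, hvK, hconn, hclosed⟩ := exists_connected_nbhdIn_eq_empty (G := G) hv
  have hclique : G.IsClique (nbhdIn G A K) := by
    refine (hT.isClique_nbhdIn hconn.preconnected
      (Set.disjoint_left.mpr fun x hx hxK ↦ (hK hxK).2 hx)).subset ?_
    rintro a ⟨⟨haA, haK⟩, h⟩
    refine ⟨⟨?_, haK⟩, h⟩
    by_contra haT
    exact hclosed.subset ⟨⟨⟨haA, haT⟩, haK⟩, h⟩
  obtain ⟨s, hs, hs'⟩ :=
    hG.exists_isClique_inter_neighborSet_of_nbhdIn (hfin.subset hK) ⟨v, hvK⟩ hclique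
  exact ⟨s, hK hs, hs'⟩

variable {P : ∀ ⦃u v : V⦄, G.Walk u v → Prop}

theorem PConvex.sdiff_singleton (hP : ∀ ⦃u v⦄ (w : G.Walk u v), P w → IsInducedPathW G w)
    (hS : PConvex G P S) {s : V} (hs : G.IsClique (S ∩ G.neighborSet s)) :
    PConvex G P (S \ {s}) := by
  rintro u v ⟨hu, hus⟩ ⟨hv, hvs⟩ w hw x hx
  refine ⟨hS hu hv w hw x hx, ?_⟩
  rintro rfl
  obtain ⟨y, hy, z, hz, hyx, hxz, hyz, hnadj⟩ :=
    (hP w hw).exists_not_adj_neighbors hx (Ne.symm hus) (Ne.symm hvs)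
  exact hnadj (hs ⟨hS hu hv w hw y hy, hyx.symm⟩ ⟨hS hu hv w hw z hz, hxz⟩ hyz)

theorem Chordal.isConvexGeometry [Finite V]
    (hP : ∀ ⦃u v⦄ (w : G.Walk u v), P w → IsInducedPathW G w) (hG : Chordal G)
    (hM : ∀ S, PConvex G P S → MConvex G S) : IsConvexGeometry (PConvex G P) := by
  intro S hS
  refine (chull_subset (fun _ h ↦ h.1) hS).antisymm' ?_
  by_contra hsub
  obtain ⟨s, hs, hclique⟩ := hG.exists_isClique_inter_neighborSet (hM _ pConvex_chull)
    (Set.toFinite _) (Set.sdiff_nonempty.mpr hsub)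
  exact hs.2 (subset_chull ⟨hs.1, hS.sdiff_singleton hP hclique⟩)

theorem isConvexGeometry_pConvex_iff [Finite V]
    (hP : ∀ ⦃u v⦄ (w : G.Walk u v), P w → IsInducedPathW G w)
    (hP' : ∀ ⦃u v⦄ (w : G.Walk u v), IsInducedPathW G w → w.length ≤ 2 → P w) :
    IsConvexGeometry (PConvex G P) ↔ Chordal G ∧ ∀ S, PConvex G P S → MConvex G S :=
  ⟨fun h ↦ ⟨h.chordal hP', fun _ ↦ h.mConvex hP'⟩, fun ⟨hG, hM⟩ ↦ hG.isConvexGeometry hP hM⟩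

end Simplicial

section ShortInducedPaths

variable {G : SimpleGraph V} {S : Set V} {a b c d u v : V}

theorem InducedP4.symm (h : InducedP4 G a b c d) : InducedP4 G d c b a := by
  obtain ⟨hab, hbc, hcd, hac, had, hbd⟩ := h
  exact ⟨hcd.symm, hbc.symm, hab.symm, fun h ↦ hbd h.symm, fun h ↦ had h.symm, fun h ↦ hac h.symm⟩

theorem LkConvex.mem_of_adj_adj {k : ℕ} (hk : 2 ≤ k) (hS : LkConvex G k S) (ha : a ∈ S)
    (hc : c ∈ S) (hab : G.Adj a b) (hbc : G.Adj b c) (hac : a ≠ c) (hnadj : ¬G.Adj a c) : b ∈ S :=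
  PConvex.mem_of_adj_adj (fun _ _ _ hw hlen ↦ ⟨hw, hlen.trans hk⟩) hS ha hc hab hbc hac hnadj

theorem lkConvex_three_iff :
    LkConvex G 3 S ↔
      (∀ a ∈ S, ∀ c ∈ S, ∀ b, G.Adj a b → G.Adj b c → a ≠ c → ¬G.Adj a c → b ∈ S) ∧
      ∀ a ∈ S, ∀ d ∈ S, ∀ b c, InducedP4 G a b c d → b ∈ S ∧ c ∈ S := by
  constructor
  · refine fun hS ↦ ⟨fun a ha c hc b ↦ hS.mem_of_adj_adj (by lia) ha hc, fun a ha d hd b c h ↦ ?_⟩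
    have hmem := hS ha hd (.cons h.1 (.cons h.2.1 (.cons h.2.2.1 .nil)))
      ⟨isInducedPathW_cons_cons_cons_nil_iff.mpr h, le_rfl⟩
    exact ⟨hmem b (by simp), hmem c (by simp)⟩
  · rintro ⟨h₂, h₃⟩ a d ha hd w ⟨hw, hlen⟩
    match w with
    | .nil => simpa
    | .cons _ .nil => simp [ha, hd]
    | .cons hab (.cons hbd .nil) =>
      obtain ⟨hne, hnadj⟩ := isInducedPathW_cons_cons_nil_iff.mp hw
      simpa [ha, hd] using h₂ a ha d hd _ hab hbd hne hnadj
    | .cons _ (.cons _ (.cons _ .nil)) =>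
      simpa [ha, hd] using h₃ a ha d hd _ _ (isInducedPathW_cons_cons_cons_nil_iff.mp hw)
    | .cons _ (.cons _ (.cons _ (.cons _ _))) =>
      simp only [Walk.length_cons] at hlen
      lia

theorem IsInducedPathW.exists_mem_commonNeighbors_or_inducedP4 {w : G.Walk u v}
    (hw : IsInducedPathW G w) (hne : u ≠ v) (hnadj : ¬G.Adj u v) (hlen : w.length ≤ 3) :
    (∃ z ∈ w.support, z ∈ G.commonNeighbors u v) ∨ ∃ p q, InducedP4 G u p q v := by
  match w with
  | .nil => exact absurd rfl hne
  | .cons h .nil => exact absurd h hnadj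
  | .cons (v := z) huz (.cons hzv .nil) => exact .inl ⟨z, by simp, huz, hzv.symm⟩
  | .cons _ (.cons _ (.cons _ .nil)) =>
    exact .inr ⟨_, _, isInducedPathW_cons_cons_cons_nil_iff.mp hw⟩
  | .cons _ (.cons _ (.cons _ (.cons _ _))) =>
    simp only [Walk.length_cons] at hlen
    lia

theorem dist_le_of_forall_mConvex {k : ℕ} (hk : 1 ≤ k) (hM : ∀ S, LkConvex G k S → MConvex G S)
    (huv : G.Reachable u v) : G.dist u v ≤ k := by
  by_contra! hlt
  have hpair : LkConvex G k {u, v} := by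
    rintro a b ha hb w ⟨hw, hlen⟩ x hx
    have hab : a = b := by
      have := (G.dist_le w).trans hlen
      grind [G.dist_comm]
    obtain rfl | rfl := eq_or_eq_of_mem_support_of_length_le_one
      (hw.length_le_one (absurd hab)) hx <;> assumption
  obtain ⟨p⟩ := huv
  obtain ⟨w, hw, -⟩ := exists_isInducedPathW p
  cases w with
  | nil => simp at hlt
  | cons h q =>
    obtain rfl | rfl := hM _ hpair (.inl rfl) (.inr rfl) _ hw _
      (List.mem_cons_of_mem _ q.start_mem_support)
    · exact G.irrefl h
    · exact absurd (dist_eq_one_iff_adj.mpr h) (by lia)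

end ShortInducedPaths

section Gems

variable {G : SimpleGraph V} {S : Set V} {u v : V} {n : ℕ} {x : Fin (n + 1) → V}

theorem Chordal.isClique_commonNeighbors (hG : Chordal G) (hne : u ≠ v) (hnadj : ¬G.Adj u v) :
    G.IsClique (G.commonNeighbors u v) := by
  rintro p ⟨hup, hvp⟩ q ⟨huq, hvq⟩ hpq
  have hq : q ∈ closedNbhd G p := (hG.mConvex_closedNbhd p).mem_of_adj_adj (fun _ _ _ hw _ ↦ hw)
    (.inr hup.symm) (.inr hvp.symm) huq hvq.symm hne hnadj
  exact hq.resolve_left hpq.symm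

theorem Chordal.lkConvex_three_union_commonNeighbors (hG : Chordal G) (hne : u ≠ v)
    (hnadj : ¬G.Adj u v) (hP4 : ∀ p q, ¬InducedP4 G u p q v) :
    LkConvex G 3 ({u, v} ∪ G.commonNeighbors u v) := by
  have hadj : ∀ z ∈ G.commonNeighbors u v, ∀ y ∈ {u, v} ∪ G.commonNeighbors u v, z ≠ y →
      G.Adj z y := by
    rintro z hz y ((rfl | rfl) | hy) hzy
    exacts [hz.1.symm, hz.2.symm, hG.isClique_commonNeighbors hne hnadj hz hy hzy]
  have endpoints : ∀ a ∈ {u, v} ∪ G.commonNeighbors u v, ∀ b ∈ {u, v} ∪ G.commonNeighbors u v,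
      a ≠ b → ¬G.Adj a b → a = u ∧ b = v ∨ a = v ∧ b = u := by
    intro a ha b hb hab hnab
    have hau : a = u ∨ a = v := ha.resolve_right fun h ↦ hnab (hadj a h b hb hab)
    have hbu : b = u ∨ b = v := hb.resolve_right fun h ↦ hnab (hadj b h a ha hab.symm).symm
    grind
  refine lkConvex_three_iff.mpr ⟨fun a ha c hc b hab hbc hac hnac ↦ ?_, fun a ha d hd b c h ↦ ?_⟩
  · obtain ⟨rfl, rfl⟩ | ⟨rfl, rfl⟩ := endpoints a ha c hc hac hnac
    exacts [.inr ⟨hab, hbc.symm⟩, .inr ⟨hbc.symm, hab⟩]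
  · obtain ⟨-, -, hcd, hac, had, -⟩ := id h
    obtain ⟨rfl, rfl⟩ | ⟨rfl, rfl⟩ := endpoints a ha d hd (fun had ↦ hac (had ▸ hcd.symm)) had
    exacts [(hP4 _ _ h).elim, (hP4 _ _ h.symm).elim]

theorem Chordal.exists_inducedP4 (hG : Chordal G) (hM : ∀ S, LkConvex G 3 S → MConvex G S)
    {w : G.Walk u v} (hw : IsInducedPathW G w) (hlen : 3 ≤ w.length) :
    ∃ p q, InducedP4 G u p q v := by
  by_contra! hP4
  have hne : u ≠ v := by
    rintro rfl
    have := hw.length_le_one (fun h ↦ absurd rfl h)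
    lia
  have hnadj : ¬G.Adj u v := fun h ↦ by
    have := hw.length_le_one (fun _ ↦ h)
    lia
  have hmem := hM _ (hG.lkConvex_three_union_commonNeighbors hne hnadj hP4) (.inl (.inl rfl))
    (.inl (.inr rfl)) w hw
  cases w with
  | nil => contradiction
  | @cons _ b _ hub w =>
    have hbv : b ≠ v → G.Adj b v := fun hbv ↦ by
      obtain (rfl | rfl) | hb := hmem b (List.mem_cons_of_mem _ w.start_mem_support)
      exacts [(G.irrefl hub).elim, absurd rfl hbv, hb.2.symm]
    have := (isInducedPathW_cons_iff.mp hw).1.length_le_one hbv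
    rw [Walk.length_cons] at hlen
    lia

theorem exists_isInducedPathW_support_eq_ofFn (hinj : Function.Injective x)
    (hadj : ∀ i j, G.Adj (x i) (x j) ↔ (i : ℕ) + 1 = j ∨ (j : ℕ) + 1 = i) :
    ∃ w : G.Walk (x 0) (x (Fin.last n)), IsInducedPathW G w ∧ w.support = List.ofFn x := by
  induction n with
  | zero => exact ⟨.nil, isInducedPathW_nil, by simp⟩
  | succ n ih =>
    obtain ⟨w, hw, hsupp⟩ : ∃ w : G.Walk (x (Fin.succ 0)) (x (Fin.last (n + 1))),
        IsInducedPathW G w ∧ w.support = List.ofFn (fun i ↦ x i.succ) :=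
      ih (hinj.comp (Fin.succ_injective _)) fun i j ↦ by simp [hadj]
    have h : G.Adj (x 0) (x (Fin.succ 0)) := (hadj _ _).mpr (.inl rfl)
    refine ⟨.cons h w, isInducedPathW_cons_iff.mpr ⟨hw, ?_, ?_⟩, ?_⟩
    · rw [hsupp, List.mem_ofFn']
      rintro ⟨i, hi⟩
      exact Fin.succ_ne_zero i (hinj hi)
    · simp only [hsupp, List.mem_ofFn', Set.mem_range, forall_exists_index,
        forall_apply_eq_imp_iff, hadj]
      intro i hi
      exact congrArg x (Fin.ext (hi.resolve_right (Nat.succ_ne_zero _)).symm)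
    · rw [Walk.support_cons, hsupp, List.ofFn_succ (f := x)]

theorem IsInducedPathW.adj_getVert_iff {w : G.Walk u v} (hw : IsInducedPathW G w) {i j : ℕ}
    (hi : i ≤ w.length) (hj : j ≤ w.length) :
    G.Adj (w.getVert i) (w.getVert j) ↔ i + 1 = j ∨ j + 1 = i := by
  obtain ⟨hpath, hchord⟩ := isInducedPathW_iff.mp hw
  constructor
  · intro hij
    obtain ⟨k, hk, he⟩ := w.mk_mem_edges_iff_exists.mp
      (hchord.mem_edges (w.getVert_mem_support i) (w.getVert_mem_support j) hij)
    have inj : ∀ {l m : ℕ}, l ≤ w.length → m ≤ w.length → w.getVert l = w.getVert m → l = m :=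
      fun hl hm h ↦ hpath.getVert_injOn hl hm h
    obtain ⟨h₁, h₂⟩ | ⟨h₁, h₂⟩ := Sym2.eq_iff.mp he
    · exact .inl (inj hk.le hi h₁ ▸ inj (Nat.succ_le_of_lt hk) hj h₂)
    · exact .inr (inj hk.le hj h₁ ▸ inj (Nat.succ_le_of_lt hk) hi h₂)
  · rintro (rfl | rfl)
    exacts [w.adj_getVert_succ hj, (w.adj_getVert_succ hi).symm]

theorem IsInducedPathW.isInducedNGem {w : G.Walk u v} (hw : IsInducedPathW G w) {z : V}
    (hz : ∀ x ∈ w.support, G.Adj z x) : IsInducedNGem G w.length (fun i ↦ w.getVert i) z := by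
  refine ⟨fun i j hij ↦ Fin.ext ?_, fun i ↦ ?_, fun i j ↦ ?_, fun i ↦ ?_⟩
  · exact hw.1.getVert_injOn (Nat.le_of_lt_succ i.2) (Nat.le_of_lt_succ j.2) hij
  · exact (hz _ (w.getVert_mem_support _)).ne'
  · exact hw.adj_getVert_iff (Nat.le_of_lt_succ i.2) (Nat.le_of_lt_succ j.2)
  · exact hz _ (w.getVert_mem_support _)

theorem gemSolved_iff (h₀ : G.Adj u (x 0)) (hn : G.Adj u (x (Fin.last n))) :
    GemSolved G n x u ↔ ∃ p q, InducedP4 G (x 0) p q (x (Fin.last n)) := by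
  unfold GemSolved
  generalize x 0 = a, x (Fin.last n) = b at *
  constructor
  · rintro ⟨w, hw, hlen, -⟩
    match w with
    | .cons _ (.cons _ (.cons _ .nil)) => exact ⟨_, _, isInducedPathW_cons_cons_cons_nil_iff.mp hw⟩
  · rintro ⟨p, q, h⟩
    refine ⟨.cons h.1 (.cons h.2.1 (.cons h.2.2.1 .nil)),
      isInducedPathW_cons_cons_cons_nil_iff.mpr h, rfl, ?_⟩
    obtain ⟨-, -, -, hq, -, hp⟩ := h
    simp only [Walk.support_cons, Walk.support_nil, List.mem_cons, List.not_mem_nil, or_false]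
    rintro (rfl | rfl | rfl | rfl)
    exacts [G.irrefl h₀, hp hn, hq h₀.symm, G.irrefl hn]

theorem IsInducedNGem.gemSolved (hG : Chordal G) (hM : ∀ S, LkConvex G 3 S → MConvex G S)
    (hn : 3 ≤ n) (hx : IsInducedNGem G n x u) : GemSolved G n x u := by
  obtain ⟨hinj, -, hadj, hu⟩ := hx
  obtain ⟨w, hw, hsupp⟩ := exists_isInducedPathW_support_eq_ofFn hinj hadj
  refine (gemSolved_iff (hu _) (hu _)).mpr (hG.exists_inducedP4 hM hw ?_)
  have := congrArg List.length hsupp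
  rw [Walk.length_support, List.length_ofFn] at this
  lia

theorem Chordal.exists_mem_commonNeighbors_or_inducedP4 (hG : Chordal G)
    (hgem : ∀ n, 4 ≤ n → ∀ (x : Fin (n + 1) → V) (u : V), IsInducedNGem G n x u → GemSolved G n x u)
    (hdist : G.dist u v ≤ 3) (hne : u ≠ v) (hnadj : ¬G.Adj u v) {w : G.Walk u v}
    (hw : IsInducedPathW G w) :
    (∃ z ∈ w.support, z ∈ G.commonNeighbors u v) ∨ ∃ p q, InducedP4 G u p q v := by
  obtain hlen | hlen := le_or_gt w.length 3
  · exact hw.exists_mem_commonNeighbors_or_inducedP4 hne hnadj hlen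
  obtain ⟨p, hp⟩ := w.reachable.exists_walk_length_eq_dist
  obtain ⟨p', hp', -, hlen'⟩ := exists_isInducedPathW p
  obtain ⟨z, -, hz⟩ | hP4 := hp'.exists_mem_commonNeighbors_or_inducedP4 hne hnadj (by lia)
  swap
  · exact .inr hP4
  refine or_iff_not_imp_left.mpr fun hno ↦ ?_
  have hzw : ∀ x ∈ w.support, G.Adj z x := fun x hx ↦
    (hG.mConvex_closedNbhd z (.inr hz.1.symm) (.inr hz.2.symm) w hw x hx).resolve_left
      fun hxz ↦ hno ⟨z, hxz ▸ hx, hz⟩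
  have hsolved := hgem _ hlen _ _ (hw.isInducedNGem hzw)
  rw [gemSolved_iff (by simpa using hz.1.symm) (by simpa using hz.2.symm)] at hsolved
  simpa using hsolved

theorem Chordal.exists_interior_mem_of_inducedP4 (hG : Chordal G) (hS : LkConvex G 3 S)
    {w : G.Walk u v} (hw : IsInducedPathW G w) (hu : u ∈ S) (hv : v ∈ S) {p q : V}
    (h : InducedP4 G u p q v)
    (ih : ∀ ⦃a b : V⦄ (y : G.Walk a b), IsInducedPathW G y → y.length < w.length → a ∈ S → b ∈ S →
      ∀ x ∈ y.support, x ∈ S) :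
    ∃ c ∈ w.support, c ≠ u ∧ c ≠ v ∧ c ∈ S := by
  obtain ⟨hpS, hqS⟩ := (lkConvex_three_iff.mp hS).2 u hu v hv p q h
  obtain ⟨hup, hpq, hqv, huq, huv, hpv⟩ := h
  by_cases hpw : p ∈ w.support
  · exact ⟨p, hpw, hup.ne', fun hpv ↦ huv (hpv ▸ hup), hpS⟩
  -- The path `p k … v` is shorter than `w` unless `k` is the second vertex of `w`.
  obtain ⟨k, hpk, r, s, rfl, hps⟩ :=
    hw.exists_append_cons hpw ⟨u, w.start_mem_support, hup.symm⟩
  have hkps : k ∈ (Walk.cons hpk s).support := by simp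
  have hkq : k ∈ closedNbhd G q :=
    hG.mConvex_closedNbhd q (.inr hpq.symm) (.inr hqv) _ hps k hkps
  have hku : k ≠ u := by
    rintro rfl
    exact hkq.elim (fun hkq ↦ huv (hkq ▸ hqv)) fun hqk ↦ huq hqk.symm
  refine ⟨k, by simp, hku, fun hkv ↦ hpv (hkv ▸ hpk), ?_⟩
  by_cases huk : G.Adj u k
  · have hqk : G.Adj q k := hkq.resolve_left fun hkq ↦ huq (hkq ▸ huk)
    exact hS.mem_of_adj_adj (by lia) hu hqS huk hqk.symm (fun huq ↦ huv (huq ▸ hqv)) huq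
  · refine ih _ hps ?_ hpS hv k hkps
    have := two_le_length_of_ne_of_not_adj r hku.symm huk
    rw [Walk.length_cons, Walk.length_append]
    lia

theorem Chordal.forall_mConvex_of_lkConvex_three_iff (hG : Chordal G) (hconn : G.Preconnected) :
    (∀ S, LkConvex G 3 S → MConvex G S) ↔
      (∀ u v, G.dist u v ≤ 3) ∧ ∀ n, 4 ≤ n → ∀ (x : Fin (n + 1) → V) (u : V),
        IsInducedNGem G n x u → GemSolved G n x u := by
  constructor
  · exact fun hM ↦ ⟨fun u v ↦ dist_le_of_forall_mConvex (by lia) hM (hconn u v),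
      fun n hn x u hx ↦ hx.gemSolved hG hM (by lia)⟩
  · rintro ⟨hdist, hgem⟩ S hS
    refine mConvex_of_forall_exists_interior fun u v w hw hu hv hne hnadj ih ↦ ?_
    obtain ⟨z, hzw, huz, hvz⟩ | ⟨p, q, h⟩ :=
      hG.exists_mem_commonNeighbors_or_inducedP4 hgem (hdist u v) hne hnadj hw
    · exact ⟨z, hzw, huz.ne', hvz.ne', hS.mem_of_adj_adj (by lia) hu hv huz hvz.symm hne hnadj⟩
    · exact hG.exists_interior_mem_of_inducedP4 hS hw hu hv h ih

end Gems

/-- A finite connected simple graph `G` is a convex geometry with respect to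
the l³-convexity iff `G` is chordal, has diameter at most 3, and every induced `n`-gem
(`n ≥ 4`) contained in `G` is solved. -/
theorem l3_convex_geometry_characterization
    {V : Type*} [Fintype V] (G : SimpleGraph V) (hconn : G.Connected) :
    IsConvexGeometry (PConvex G (fun _ _ w => IsInducedPathW G w ∧ w.length ≤ 3)) ↔
      (Chordal G ∧ (∀ u v : V, G.dist u v ≤ 3) ∧
        ∀ (n : ℕ), 4 ≤ n → ∀ (x : Fin (n + 1) → V) (u : V),
          IsInducedNGem G n x u → GemSolved G n x u) := by
  have hgeo := isConvexGeometry_pConvex_iff (G := G)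
    (P := fun _ _ w ↦ IsInducedPathW G w ∧ w.length ≤ 3) (fun _ _ _ h ↦ h.1)
    (fun _ _ _ hw hlen ↦ ⟨hw, by lia⟩)
  exact hgeo.trans
    (and_congr_right fun hG ↦ hG.forall_mConvex_of_lkConvex_three_iff hconn.preconnected)
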